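/- Let t₁, …, t_m be a finite list of transactions that are pairwise non-conflicting (for all i ≠ j, W(t_i) ∩ (R(t_j) ∪ W(t_j)) = ∅). Then the result of applying all of them in sequence to any initial database state is independent of the order: for every permutation of the list, the composition of the corresponding update functions yields the same final state. Hence the pairwise conflict-free set of transactions committed in Styx's lock-free phase can be committed in any order—in particular concurrently across workers—with a uniquely determined, serializable outcome. -/

import Mathlib

/-- A transaction over a database state `K → V`: a finite read set, a finite write set, and an
update function that (i) leaves every key outside the write set unchanged and (ii) writes values
that depend only on the values of the keys in the read set. -/
structure Txn (K V : Type*) where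
  R : Finset K
  W : Finset K
  apply : (K → V) → (K → V)
  frame : ∀ (s : K → V) (k : K), k ∉ W → apply s k = s k
  reads : ∀ (s s' : K → V), (∀ k ∈ R, s k = s' k) → ∀ k ∈ W, apply s k = apply s' k

namespace Txn

variable {K V : Type*} {t t' : Txn K V} {k : K}

/-- The symmetric relation of two transactions that do not conflict: neither writes a key that the
other reads or writes. It is phrased with `Disjoint` so as not to require decidable equality of
keys. -/
structure Nonconflicting (t t' : Txn K V) : Prop where
  disjoint_W_R : Disjoint t.W t'.R
  disjoint_R_W : Disjoint t.R t'.W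
  disjoint_W_W : Disjoint t.W t'.W

theorem nonconflicting_iff_inter_union_eq_empty [DecidableEq K] :
    t.Nonconflicting t' ↔ t.W ∩ (t'.R ∪ t'.W) = ∅ ∧ t'.W ∩ (t.R ∪ t.W) = ∅ := by
  simp only [← Finset.disjoint_iff_inter_eq_empty, Finset.disjoint_union_right]
  constructor
  · rintro ⟨hWR, hRW, hWW⟩
    exact ⟨⟨hWR, hWW⟩, hRW.symm, hWW.symm⟩
  · rintro ⟨⟨hWR, hWW⟩, hWR', -⟩
    exact ⟨hWR, hWR'.symm, hWW⟩

theorem Nonconflicting.symm (h : t.Nonconflicting t') : t'.Nonconflicting t :=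
  ⟨h.disjoint_R_W.symm, h.disjoint_W_R.symm, h.disjoint_W_W.symm⟩

theorem apply_apply_eq_apply_of_mem_W (h : Disjoint t.R t'.W) (hk : k ∈ t.W) (s : K → V) :
    t.apply (t'.apply s) k = t.apply s k :=
  t.reads _ _ (fun r hr ↦ t'.frame s r (Finset.disjoint_left.mp h hr)) k hk

theorem Nonconflicting.apply_apply_comm_of_mem_W (h : t.Nonconflicting t') (hk : k ∈ t.W)
    (s : K → V) : t.apply (t'.apply s) k = t'.apply (t.apply s) k :=
  calc
    t.apply (t'.apply s) k = t.apply s k := apply_apply_eq_apply_of_mem_W h.disjoint_R_W hk s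
    _ = t'.apply (t.apply s) k :=
      (t'.frame _ k (Finset.disjoint_left.mp h.disjoint_W_W hk)).symm

theorem Nonconflicting.commute_apply (h : t.Nonconflicting t') :
    Function.Commute t.apply t'.apply := by
  intro s
  funext k
  by_cases hk : k ∈ t.W
  · exact h.apply_apply_comm_of_mem_W hk s
  by_cases hk' : k ∈ t'.W
  · exact (h.symm.apply_apply_comm_of_mem_W hk' s).symm
  · rw [t.frame _ k hk, t'.frame _ k hk', t'.frame _ k hk', t.frame _ k hk]

end Txn

theorem foldl_eq_foldl_of_perm_of_pairwise_commute {α β : Type*} {f : α → β → β} {l l' : List α}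
    (hperm : l.Perm l') (hcomm : l.Pairwise fun a a' ↦ Function.Commute (f a) (f a')) (b : β) :
    l.foldl (fun b a ↦ f a b) b = l'.foldl (fun b a ↦ f a b) b := by
  have : Std.Symm fun a a' ↦ Function.Commute (f a) (f a') := ⟨fun _ _ h ↦ h.symm⟩
  have hall : ∀ a ∈ l, ∀ a' ∈ l, Function.Commute (f a) (f a') := fun a ha a' ha' ↦
    hcomm.forall_of_forall (fun a _ ↦ Function.Commute.refl (f a)) ha ha'
  exact hperm.foldl_eq' (fun a ha a' ha' c ↦ hall a' ha' a ha c) b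

/-- Let `t₁, …, t_m` be a finite list of pairwise non-conflicting transactions
(for all `i ≠ j`, `W(t_i) ∩ (R(t_j) ∪ W(t_j)) = ∅`).  Then the result of applying all of them in
sequence to any initial database state is independent of the order: for every permutation of the
list, applying the transactions in that order yields the same final state. -/
theorem pairwise_nonconflicting_order_independent {K V : Type*} [DecidableEq K]
    (ts : List (Txn K V))
    (hpair : ∀ i j : Fin ts.length, i ≠ j →
      (ts.get i).W ∩ ((ts.get j).R ∪ (ts.get j).W) = ∅) :
    ∀ ts' : List (Txn K V), ts.Perm ts' →
      ∀ s : K → V,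
        ts.foldl (fun st t => t.apply st) s = ts'.foldl (fun st t => t.apply st) s := by
  intro ts' hperm s
  have hnonconf : ts.Pairwise Txn.Nonconflicting := List.pairwise_iff_get.mpr fun i j hij ↦
    Txn.nonconflicting_iff_inter_union_eq_empty.mpr ⟨hpair i j hij.ne, hpair j i hij.ne'⟩
  exact foldl_eq_foldl_of_perm_of_pairwise_commute hperm
    (hnonconf.imp Txn.Nonconflicting.commute_apply) s
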